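/- arXiv:2403.18956 — 6 statements merged into one kernel-verified Lean document; each statement's English description precedes it below -/
import Mathlib

section
/- (Proposition 1, pointwise form.) Let ω_1,…,ω_n ∈ ℝ^d and V_i ∈ ℝ^{d×r_i}, and define h(x0) := inf over λ_i ∈ ℝ^{r_i} of ‖Σ_{i=1}^n x0[i](ω_i + V_i λ_i)‖². Let N ∈ ℝ^{d×n} be the matrix whose i-th column is ω_i, let M := [V_1 … V_n] ∈ ℝ^{d×(Σ_i r_i)}, and let P : ℝ^d → ℝ^d be the orthogonal projection onto the column space of M. Then for every x0 ∈ ℝⁿ with all coordinates nonzero, h(x0) = ‖(I − P) N x0‖² and the infimum is attained; consequently the sets { x0 : h(x0) ≤ 1 } and { x0 : ‖(I − P) N x0‖² ≤ 1 } coincide outside a Lebesgue-null subset of ℝⁿ and have equal Lebesgue volume. -/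
open Matrix Finset MeasureTheory

/-- Proposition 1, pointwise form: with `N = [ω_1 … ω_n]`,
`M = [V_1 … V_n]` and `P` the orthogonal projection onto the column space of `M`
(symmetric idempotent with range equal to the column space of `M`), for every `x0` with
all coordinates nonzero `h(x0) = ‖(I − P) N x0‖²` and the infimum is attained; hence the
sublevel sets `{h ≤ 1}` and `{‖(I−P)N x0‖² ≤ 1}` differ by a Lebesgue-null set and have
equal volume. -/
theorem constrained_energy_pointwise {n d : ℕ} (r : Fin n → ℕ)
    (ω : Fin n → Fin d → ℝ) (V : ∀ i : Fin n, Matrix (Fin d) (Fin (r i)) ℝ)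
    (N : Matrix (Fin d) (Fin n) ℝ) (hN : ∀ j i, N j i = ω i j)
    (M : Matrix (Fin d) ((i : Fin n) × Fin (r i)) ℝ)
    (hM : ∀ j p, M j p = V p.1 j p.2)
    (P : Matrix (Fin d) (Fin d) ℝ)
    (hPidem : P * P = P) (hPsym : Pᵀ = P)
    (hPrange : LinearMap.range P.mulVecLin = LinearMap.range M.mulVecLin)
    (h : (Fin n → ℝ) → ℝ)
    (hh : ∀ x0 : Fin n → ℝ, h x0 = sInf
      { e : ℝ | ∃ lam : ∀ i : Fin n, Fin (r i) → ℝ,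
          e = ∑ j : Fin d, (∑ i : Fin n, x0 i * (ω i j + (V i).mulVec (lam i) j)) ^ 2 }) :
    (∀ x0 : Fin n → ℝ, (∀ i, x0 i ≠ 0) →
        h x0 = ∑ j : Fin d, (((1 - P) * N).mulVec x0 j) ^ 2 ∧
        ∃ lam : ∀ i : Fin n, Fin (r i) → ℝ,
          ∑ j : Fin d, (∑ i : Fin n, x0 i * (ω i j + (V i).mulVec (lam i) j)) ^ 2 = h x0) ∧
    volume (symmDiff { x0 : Fin n → ℝ | h x0 ≤ 1 }
        { x0 : Fin n → ℝ | ∑ j : Fin d, (((1 - P) * N).mulVec x0 j) ^ 2 ≤ 1 }) = 0 ∧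
    volume { x0 : Fin n → ℝ | h x0 ≤ 1 }
      = volume { x0 : Fin n → ℝ | ∑ j : Fin d, (((1 - P) * N).mulVec x0 j) ^ 2 ≤ 1 } := by
  have key : ∀ (x0 : Fin n → ℝ) (lam : ∀ i : Fin n, Fin (r i) → ℝ) (j : Fin d),
      ∑ i : Fin n, x0 i * (ω i j + (V i).mulVec (lam i) j)
        = (N.mulVec x0 + M.mulVec (fun p => x0 p.1 * lam p.1 p.2)) j := by
    intro x0 lam j
    simp only [Pi.add_apply, Matrix.mulVec, dotProduct, hN, hM, Fintype.sum_sigma, mul_add,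
      Finset.sum_add_distrib, Finset.mul_sum]
    congr 1
    · exact Finset.sum_congr rfl fun i _ => mul_comm _ _
    · exact Finset.sum_congr rfl fun i _ => Finset.sum_congr rfl fun k _ => by ring
  have hPM : ∀ μ, P.mulVec (M.mulVec μ) = M.mulVec μ := by
    intro μ
    have : M.mulVecLin μ ∈ LinearMap.range P.mulVecLin := by
      rw [hPrange]; exact ⟨μ, rfl⟩
    obtain ⟨z, hz⟩ := this
    simp only [Matrix.mulVecLin_apply] at hz
    rw [← hz, Matrix.mulVec_mulVec, hPidem]
  have hsq : ∀ v : Fin d → ℝ, ∑ j, v j ^ 2 = v ⬝ᵥ v := by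
    intro v; simp [dotProduct, sq]
  have hform : ∀ x0 : Fin n → ℝ, ((1 - P) * N).mulVec x0
      = N.mulVec x0 - P.mulVec (N.mulVec x0) := by
    intro x0
    rw [← Matrix.mulVec_mulVec, Matrix.sub_mulVec, Matrix.one_mulVec]
  have hle : ∀ v : Fin d → ℝ, (v - P.mulVec v) ⬝ᵥ (v - P.mulVec v) ≤ v ⬝ᵥ v := by
    intro v
    have h1 : P.mulVec v ⬝ᵥ P.mulVec v = v ⬝ᵥ P.mulVec v := by
      conv_lhs => rw [Matrix.dotProduct_mulVec, ← Matrix.mulVec_transpose, hPsym,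
        Matrix.mulVec_mulVec, hPidem]
      exact dotProduct_comm _ _
    have h2 : 0 ≤ P.mulVec v ⬝ᵥ P.mulVec v := by
      rw [← hsq]; positivity
    have h3 := dotProduct_comm v (P.mulVec v)
    simp only [sub_dotProduct, dotProduct_sub]
    linarith
  have main : ∀ x0 : Fin n → ℝ, (∀ i, x0 i ≠ 0) →
        h x0 = ∑ j : Fin d, (((1 - P) * N).mulVec x0 j) ^ 2 ∧
        ∃ lam : ∀ i : Fin n, Fin (r i) → ℝ,
          ∑ j : Fin d, (∑ i : Fin n, x0 i * (ω i j + (V i).mulVec (lam i) j)) ^ 2 = h x0 := by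
    intro x0 hx
    have hex : ∃ lam : ∀ i : Fin n, Fin (r i) → ℝ,
        ∑ j : Fin d, (∑ i : Fin n, x0 i * (ω i j + (V i).mulVec (lam i) j)) ^ 2
          = ∑ j : Fin d, (((1 - P) * N).mulVec x0 j) ^ 2 := by
      have : P.mulVecLin (-(N.mulVec x0)) ∈ LinearMap.range M.mulVecLin := by
        rw [← hPrange]; exact ⟨_, rfl⟩
      obtain ⟨μ, hμ⟩ := this
      simp only [Matrix.mulVecLin_apply, Matrix.mulVec_neg] at hμ
      refine ⟨fun i k => μ ⟨i, k⟩ / x0 i, ?_⟩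
      have e : (fun p : (i : Fin n) × Fin (r i) => x0 p.1 * (μ ⟨p.1, p.2⟩ / x0 p.1)) = μ := by
        funext p
        exact mul_div_cancel₀ _ (hx p.1)
      simp only [key, hform, e, hμ, ← sub_eq_add_neg]
    have hval : h x0 = ∑ j : Fin d, (((1 - P) * N).mulVec x0 j) ^ 2 := by
      rw [hh]
      apply IsLeast.csInf_eq
      constructor
      · obtain ⟨lam, hl⟩ := hex
        exact ⟨lam, hl.symm⟩
      · rintro e ⟨lam, rfl⟩
        simp only [key]
        rw [hsq, hsq, hform]
        refine le_trans (le_of_eq ?_)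
          (hle (N.mulVec x0 + M.mulVec (fun p => x0 p.1 * lam p.1 p.2)))
        rw [Matrix.mulVec_add, hPM, add_sub_add_right_eq_sub]
    exact ⟨hval, by rw [hval]; exact hex⟩
  have hae : { x0 : Fin n → ℝ | h x0 ≤ 1 } =ᵐ[volume]
      { x0 : Fin n → ℝ | ∑ j : Fin d, (((1 - P) * N).mulVec x0 j) ^ 2 ≤ 1 } := by
    have h0 : ∀ᵐ x0 : Fin n → ℝ, ∀ i, x0 i ≠ 0 := by
      rw [ae_all_iff]
      intro i
      exact Measure.ae_eval_ne (μ := fun _ : Fin n => (volume : Measure ℝ)) i 0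
    filter_upwards [h0] with x0 hx
    apply propext
    change h x0 ≤ 1 ↔ ∑ j : Fin d, (((1 - P) * N).mulVec x0 j) ^ 2 ≤ 1
    rw [(main x0 hx).1]
  exact ⟨main, measure_symmDiff_eq_zero_iff.mpr hae, measure_congr hae⟩
end

section
/- (Proposition 1, volume/algorithm-output form.) In the setting above, set G := (I − P) N ∈ ℝ^{d×n}. If additionally A ∈ ℝ^{n×n} is invertible, T ≥ 1, and GᵀG is invertible, then the Lebesgue volume of the set { A^T x0 : x0 ∈ ℝⁿ, h(x0) ≤ 1 } equals |det(A^T)| / √(det(GᵀG)) times the volume of the Euclidean unit ball in ℝⁿ, which is the output of Algorithm 1 (in unit-ball-normalized volume). -/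
open Matrix Finset MeasureTheory

section
open scoped MatrixOrder Matrix.Norms.L2Operator
theorem aux_factor {n : ℕ} (S : Matrix (Fin n) (Fin n) ℝ) (hS : S.PosSemidef) :
    ∃ R : Matrix (Fin n) (Fin n) ℝ, S = Rᵀ * R := by
  obtain ⟨y, hy⟩ := CStarAlgebra.nonneg_iff_eq_star_mul_self.mp hS.nonneg
  exact ⟨y, by rw [hy, star_eq_conjTranspose, conjTranspose_eq_transpose_of_trivial]⟩
end

theorem aux_h {n d : ℕ} (r : Fin n → ℕ)
    (ω : Fin n → Fin d → ℝ) (V : ∀ i : Fin n, Matrix (Fin d) (Fin (r i)) ℝ)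
    (N : Matrix (Fin d) (Fin n) ℝ) (hN : ∀ j i, N j i = ω i j)
    (M : Matrix (Fin d) ((i : Fin n) × Fin (r i)) ℝ)
    (hM : ∀ j p, M j p = V p.1 j p.2)
    (P : Matrix (Fin d) (Fin d) ℝ)
    (hPidem : P * P = P) (hPsym : Pᵀ = P)
    (hPrange : LinearMap.range P.mulVecLin = LinearMap.range M.mulVecLin)
    (G : Matrix (Fin d) (Fin n) ℝ) (hG : G = (1 - P) * N)
    (x : Fin n → ℝ) (hx : ∀ i, x i ≠ 0) :
    sInf { e : ℝ | ∃ lam : ∀ i : Fin n, Fin (r i) → ℝ,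
          e = ∑ j : Fin d, (∑ i : Fin n, x i * (ω i j + (V i).mulVec (lam i) j)) ^ 2 }
      = (G *ᵥ x) ⬝ᵥ (G *ᵥ x) := by
  have key : ∀ lam : ∀ i : Fin n, Fin (r i) → ℝ, ∀ j,
      ∑ i : Fin n, x i * (ω i j + (V i).mulVec (lam i) j)
        = (N *ᵥ x + M *ᵥ (fun p => x p.1 * lam p.1 p.2)) j := by
    intro lam j
    simp only [Pi.add_apply, mulVec, dotProduct, Fintype.sum_sigma, hN, hM, mul_add,
      Finset.sum_add_distrib, Finset.mul_sum]
    congr 1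
    · exact Finset.sum_congr rfl fun i _ => mul_comm _ _
    · exact Finset.sum_congr rfl fun i _ => Finset.sum_congr rfl fun k _ => by ring
  have hGx : G *ᵥ x = N *ᵥ x - P *ᵥ (N *ᵥ x) := by
    rw [hG, ← mulVec_mulVec, sub_mulVec, one_mulVec]
  have hPG : P *ᵥ (G *ᵥ x) = 0 := by
    rw [hGx, mulVec_sub, mulVec_mulVec _ P P, hPidem, sub_self]
  have orth : ∀ w, (G *ᵥ x) ⬝ᵥ (P *ᵥ w) = 0 := by
    intro w
    rw [dotProduct_mulVec, ← mulVec_transpose, hPsym, hPG, zero_dotProduct]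
  apply IsLeast.csInf_eq
  constructor
  · have : P *ᵥ (-(N *ᵥ x)) ∈ LinearMap.range M.mulVecLin := by
      rw [← hPrange]; exact ⟨_, rfl⟩
    obtain ⟨μ, hμ⟩ := this
    rw [mulVecLin_apply] at hμ
    refine ⟨fun i k => μ ⟨i, k⟩ / x i, ?_⟩
    simp only [key]
    have : (fun p : (i : Fin n) × Fin (r i) => x p.1 * (μ ⟨p.1, p.2⟩ / x p.1)) = μ := by
      funext p
      exact mul_div_cancel₀ _ (hx p.1)
    rw [this, hμ, mulVec_neg, ← sub_eq_add_neg, ← hGx]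
    simp [dotProduct, sq]
  · rintro e ⟨lam, rfl⟩
    simp only [key]
    have : M *ᵥ (fun p => x p.1 * lam p.1 p.2) ∈ LinearMap.range P.mulVecLin := by
      rw [hPrange]; exact ⟨_, rfl⟩
    obtain ⟨w, hw⟩ := this
    rw [mulVecLin_apply] at hw
    rw [← hw]
    have e1 : N *ᵥ x + P *ᵥ w = G *ᵥ x + P *ᵥ (N *ᵥ x + w) := by
      rw [hGx, mulVec_add]; abel
    rw [e1]
    generalize hz : P *ᵥ (N *ᵥ x + w) = z
    have ho : (G *ᵥ x) ⬝ᵥ z = 0 := hz ▸ orth _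
    have : ∑ j, (G *ᵥ x + z) j ^ 2
        = (G *ᵥ x + z) ⬝ᵥ (G *ᵥ x + z) := by simp [dotProduct, sq]
    rw [this, add_dotProduct, dotProduct_add, dotProduct_add, dotProduct_comm z, ho]
    have : 0 ≤ z ⬝ᵥ z := Finset.sum_nonneg fun i _ => mul_self_nonneg _
    linarith

theorem aux_null {n : ℕ} (C : Matrix (Fin n) (Fin n) ℝ) (hC : IsUnit C.det) :
    ∀ᵐ y : EuclideanSpace ℝ (Fin n), ∀ i, (C *ᵥ (fun k => y k)) i ≠ 0 := by
  rw [ae_all_iff]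
  intro i
  let f : EuclideanSpace ℝ (Fin n) →ₗ[ℝ] ℝ :=
    (EuclideanSpace.proj i).toLinearMap ∘ₗ (toLpLin 2 2 C)
  have hf : ∀ y, f y = (C *ᵥ (fun k => y k)) i := fun y => rfl
  have hne : LinearMap.ker f ≠ ⊤ := by
    intro h
    have h1 : WithLp.toLp 2 (C⁻¹ *ᵥ (Pi.single i 1)) ∈ LinearMap.ker f := by rw [h]; trivial
    rw [LinearMap.mem_ker, hf] at h1
    change (C *ᵥ (C⁻¹ *ᵥ (Pi.single i 1))) i = 0 at h1
    rw [mulVec_mulVec, mul_nonsing_inv _ hC, one_mulVec] at h1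
    simp at h1
  have := Measure.addHaar_submodule (volume : Measure (EuclideanSpace ℝ (Fin n))) _ hne
  rw [ae_iff]
  convert this using 2
  ext y
  simp [hf]

/-- Proposition 1, volume/algorithm-output form: with `G = (I − P) N`,
`A` invertible and `GᵀG` invertible, the Lebesgue volume of `{ A^T x0 : h(x0) ≤ 1 }`
equals `|det(A^T)| / √(det(GᵀG))` times the volume of the Euclidean unit ball, which is
the output of Algorithm 1. -/
theorem constrained_controllability_algorithm_output {n d : ℕ} (r : Fin n → ℕ)
    (ω : Fin n → Fin d → ℝ) (V : ∀ i : Fin n, Matrix (Fin d) (Fin (r i)) ℝ)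
    (N : Matrix (Fin d) (Fin n) ℝ) (hN : ∀ j i, N j i = ω i j)
    (M : Matrix (Fin d) ((i : Fin n) × Fin (r i)) ℝ)
    (hM : ∀ j p, M j p = V p.1 j p.2)
    (P : Matrix (Fin d) (Fin d) ℝ)
    (hPidem : P * P = P) (hPsym : Pᵀ = P)
    (hPrange : LinearMap.range P.mulVecLin = LinearMap.range M.mulVecLin)
    (h : (Fin n → ℝ) → ℝ)
    (hh : ∀ x0 : Fin n → ℝ, h x0 = sInf
      { e : ℝ | ∃ lam : ∀ i : Fin n, Fin (r i) → ℝ,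
          e = ∑ j : Fin d, (∑ i : Fin n, x0 i * (ω i j + (V i).mulVec (lam i) j)) ^ 2 })
    (G : Matrix (Fin d) (Fin n) ℝ) (hG : G = (1 - P) * N)
    (A : Matrix (Fin n) (Fin n) ℝ) (hA : IsUnit A.det)
    (T : ℕ) (hT : 1 ≤ T)
    (hGtG : IsUnit (Gᵀ * G).det) :
    volume { y : EuclideanSpace ℝ (Fin n) |
        ∃ x0 : Fin n → ℝ, (fun i => y i) = (A ^ T).mulVec x0 ∧ h x0 ≤ 1 }
      = ENNReal.ofReal (|(A ^ T).det| / Real.sqrt (Gᵀ * G).det) *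
        volume (Metric.closedBall (0 : EuclideanSpace ℝ (Fin n)) 1) := by
  have hB : IsUnit (A ^ T).det := by rw [det_pow]; exact hA.pow T
  generalize A ^ T = B at hB ⊢
  have hpsd : (Gᵀ * G).PosSemidef := by
    simpa [conjTranspose_eq_transpose_of_trivial] using posSemidef_conjTranspose_mul_self G
  obtain ⟨R, hR⟩ := aux_factor _ hpsd
  have hdet : (Gᵀ * G).det = R.det ^ 2 := by rw [hR, det_mul, det_transpose, sq]
  have hR0 : R.det ≠ 0 := by
    intro h0
    rw [hdet, h0] at hGtG
    simp at hGtG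
  have hB0 : B.det ≠ 0 := hB.ne_zero
  have hCu : IsUnit (B⁻¹).det := isUnit_nonsing_inv_det _ hB
  have hdC : (toLpLin 2 2 (R * B⁻¹)).det = R.det * (B.det)⁻¹ := by
    rw [LinearMap.det_toLpLin, det_mul, det_nonsing_inv, Ring.inverse_eq_inv']
  have hvol := Measure.addHaar_preimage_linearMap
    (volume : Measure (EuclideanSpace ℝ (Fin n))) (f := toLpLin 2 2 (R * B⁻¹))
    (by rw [hdC]; exact mul_ne_zero hR0 (inv_ne_zero hB0)) (Metric.closedBall 0 1)
  have hconst : |B.det| / Real.sqrt (Gᵀ * G).det = |((toLpLin 2 2 (R * B⁻¹)).det)⁻¹| := by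
    rw [hdC, hdet, Real.sqrt_sq_eq_abs, mul_inv, inv_inv, abs_mul, abs_inv]
    field_simp
  rw [hconst, ← hvol]
  apply measure_congr
  filter_upwards [aux_null B⁻¹ hCu] with y hy
  apply propext
  change (∃ x0 : Fin n → ℝ, (fun i => y i) = B *ᵥ x0 ∧ h x0 ≤ 1) ↔
    toLpLin 2 2 (R * B⁻¹) y ∈ Metric.closedBall 0 1
  have h1 : (∃ x0 : Fin n → ℝ, (fun i => y i) = B *ᵥ x0 ∧ h x0 ≤ 1) ↔
      h (B⁻¹ *ᵥ (fun i => y i)) ≤ 1 := by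
    constructor
    · rintro ⟨x0, e, hx⟩
      rwa [e, mulVec_mulVec, nonsing_inv_mul _ hB, one_mulVec]
    · intro hx
      exact ⟨_, by rw [mulVec_mulVec, mul_nonsing_inv _ hB, one_mulVec], hx⟩
  rw [h1, hh, aux_h r ω V N hN M hM P hPidem hPsym hPrange G hG _ hy]
  rw [mem_closedBall_zero_iff, ← sq_le_one_iff₀ (norm_nonneg _), EuclideanSpace.norm_sq_eq]
  have h2 : ∑ i, ‖(toLpLin 2 2 (R * B⁻¹) y) i‖ ^ 2
      = (R *ᵥ (B⁻¹ *ᵥ (fun i => y i))) ⬝ᵥ (R *ᵥ (B⁻¹ *ᵥ (fun i => y i))) := by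
    rw [mulVec_mulVec]
    simp only [dotProduct, Real.norm_eq_abs, sq, abs_mul_abs_self]
    rfl
  rw [h2]
  have h3 : ∀ {m : ℕ} (K : Matrix (Fin m) (Fin n) ℝ) (v : Fin n → ℝ),
      (K *ᵥ v) ⬝ᵥ (K *ᵥ v) = v ⬝ᵥ ((Kᵀ * K) *ᵥ v) := by
    intro m K v
    rw [← mulVec_mulVec, dotProduct_mulVec v, vecMul_transpose]
  rw [h3, h3, hR]
end

section
/- (Lemma 3: dimension of the constrained feasible trajectory set.) Assume each per-column feasible set C_i, i = 1,…,Nx, is nonempty. Then for every x0 ∈ ℝ^{Nx}, the constrained feasible set T(x0) = { Σ_{i=1}^{Nx} x0[i] s_i : s_i ∈ C_i } is an affine translate of the subspace Σ_{i : x0[i] ≠ 0} K_i of V (the subspace spanned by the union of the K_i with x0[i] ≠ 0); in particular, if x0[i] ≠ 0 for every i, then dim T(x0) = dim (K_1 + K_2 + … + K_{Nx}), independent of x0. -/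
open Matrix Finset

theorem aux_translate {E : Type*} [AddCommGroup E] [Module ℝ E] {n : ℕ}
    (K : Fin n → Set E) (h0 : ∀ i, (0 : E) ∈ K i)
    (hlin : ∀ i, ∀ a ∈ K i, ∀ b ∈ K i, ∀ r : ℝ, a + r • b ∈ K i)
    (C : Fin n → Set E) (c : Fin n → E)
    (hC : ∀ i, ∀ s, s ∈ C i ↔ s - c i ∈ K i) (x : Fin n → ℝ) :
    { s | ∃ f : Fin n → E, (∀ i, f i ∈ C i) ∧ s = ∑ i, x i • f i } =
      ((∑ i, x i • c i) + ·) ''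
        (Submodule.span ℝ (⋃ i ∈ { i : Fin n | x i ≠ 0 }, K i) : Set E) := by
  ext s
  constructor
  · rintro ⟨f, hf, rfl⟩
    refine ⟨∑ i, x i • (f i - c i), ?_, ?_⟩
    · refine Submodule.sum_mem _ fun i _ => ?_
      by_cases hx : x i = 0
      · simp [hx]
      · refine Submodule.smul_mem _ _ (Submodule.subset_span ?_)
        exact Set.mem_biUnion (show i ∈ { i : Fin n | x i ≠ 0 } from hx) ((hC i _).1 (hf i))
    · simp [smul_sub, Finset.sum_sub_distrib]
  · rintro ⟨v, hv, rfl⟩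
    have key : ∃ k : Fin n → E, (∀ i, k i ∈ K i) ∧ v = ∑ i, x i • k i := by
      refine Submodule.span_induction
        (p := fun v _ => ∃ k : Fin n → E, (∀ i, k i ∈ K i) ∧ v = ∑ i, x i • k i)
        ?_ ?_ ?_ ?_ hv
      · intro w hw
        simp only [Set.mem_iUnion] at hw
        obtain ⟨i, hi, hw⟩ := hw
        have hi' : x i ≠ 0 := hi
        refine ⟨Pi.single i ((x i)⁻¹ • w), fun j => ?_, ?_⟩
        · by_cases hj : j = i
          · subst hj
            simpa using hlin j 0 (h0 j) w hw (x j)⁻¹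
          · simpa [Pi.single_eq_of_ne hj] using h0 j
        · rw [Finset.sum_eq_single i]
          · simp [smul_smul, hi']
          · intro j _ hj
            simp [Pi.single_eq_of_ne hj]
          · simp
      · exact ⟨fun _ => 0, h0, by simp⟩
      · rintro a b _ _ ⟨k, hk, rfl⟩ ⟨l, hl, rfl⟩
        refine ⟨fun i => k i + l i, fun i => ?_, ?_⟩
        · simpa using hlin i _ (hk i) _ (hl i) 1
        · simp [Finset.sum_add_distrib]
      · rintro r a _ ⟨k, hk, rfl⟩
        refine ⟨fun i => r • k i, fun i => ?_, ?_⟩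
        · simpa using hlin i _ (h0 i) _ (hk i) r
        · simp [Finset.smul_sum, smul_comm r]
    obtain ⟨k, hk, rfl⟩ := key
    refine ⟨fun i => c i + k i, fun i => (hC i _).2 (by simpa using hk i), ?_⟩
    simp [Finset.sum_add_distrib]

/-- Lemma 3: if each per-column feasible set `C_i` is nonempty, then the
constrained feasible set `T(x0) = { ∑_i x0[i] s_i : s_i ∈ C_i }` is an affine translate
of the subspace spanned by the union of the `K_i` with `x0[i] ≠ 0`; in particular, if
all coordinates of `x0` are nonzero, its dimension (the direction of its affine span)
is `dim (K_1 + … + K_{Nx})`, independent of `x0`. -/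
theorem constrained_feasible_set_dimension {Nx Nu T : ℕ} (hT : 1 ≤ T)
    (A : Matrix (Fin Nx) (Fin Nx) ℝ) (B : Matrix (Fin Nx) (Fin Nu) ℝ)
    (S : (Fin Nx → ℝ) → Set ((Fin T → Fin Nx → ℝ) × (Fin T → Fin Nu → ℝ)))
    (hS : ∀ x0 : Fin Nx → ℝ, S x0 = { su |
        su.1 ⟨0, by omega⟩ = x0 ∧
        (∀ t : ℕ, (ht : t + 1 < T) →
          su.1 ⟨t + 1, ht⟩ =
            A.mulVec (su.1 ⟨t, by omega⟩) + B.mulVec (su.2 ⟨t, by omega⟩)) ∧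
        A.mulVec (su.1 ⟨T - 1, by omega⟩) + B.mulVec (su.2 ⟨T - 1, by omega⟩) = 0 })
    (R : Fin Nx → Set ((Fin T × Fin Nx) ⊕ (Fin T × Fin Nu)))
    (coord : ((Fin T → Fin Nx → ℝ) × (Fin T → Fin Nu → ℝ)) →
      ((Fin T × Fin Nx) ⊕ (Fin T × Fin Nu)) → ℝ)
    (hcoord : ∀ su c, coord su c =
      Sum.elim (fun p : Fin T × Fin Nx => su.1 p.1 p.2)
        (fun p : Fin T × Fin Nu => su.2 p.1 p.2) c)
    (C : Fin Nx → Set ((Fin T → Fin Nx → ℝ) × (Fin T → Fin Nu → ℝ)))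
    (hC : ∀ i, C i = { s ∈ S (Pi.single i 1) | ∀ c ∈ R i, coord s c = 0 })
    (K : Fin Nx → Set ((Fin T → Fin Nx → ℝ) × (Fin T → Fin Nu → ℝ)))
    (hK : ∀ i, K i = { k ∈ S 0 | ∀ c ∈ R i, coord k c = 0 })
    (Tset : (Fin Nx → ℝ) → Set ((Fin T → Fin Nx → ℝ) × (Fin T → Fin Nu → ℝ)))
    (hTset : ∀ x0 : Fin Nx → ℝ, Tset x0 = { s |
        ∃ f : Fin Nx → (Fin T → Fin Nx → ℝ) × (Fin T → Fin Nu → ℝ),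
          (∀ i, f i ∈ C i) ∧ s = ∑ i : Fin Nx, x0 i • f i })
    (hCne : ∀ i, (C i).Nonempty) :
    (∀ x0 : Fin Nx → ℝ, ∃ s₀,
        Tset x0 = (s₀ + ·) ''
          (Submodule.span ℝ (⋃ i ∈ { i : Fin Nx | x0 i ≠ 0 }, K i) :
            Set ((Fin T → Fin Nx → ℝ) × (Fin T → Fin Nu → ℝ)))) ∧
    (∀ x0 : Fin Nx → ℝ, (∀ i, x0 i ≠ 0) →
        (affineSpan ℝ (Tset x0)).direction =
          Submodule.span ℝ (⋃ i : Fin Nx, K i)) := by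
  have hSlin : ∀ a b s s', s ∈ S a → s' ∈ S b → ∀ r : ℝ, s + r • s' ∈ S (a + r • b) := by
    intro a b s s' h h' r
    rw [hS] at h h' ⊢
    obtain ⟨h1, h2, h3⟩ := h
    obtain ⟨g1, g2, g3⟩ := h'
    refine ⟨?_, ?_, ?_⟩
    · simp [h1, g1]
    · intro t ht
      simp only [Prod.fst_add, Prod.snd_add, Prod.smul_fst, Prod.smul_snd, Pi.add_apply,
        Pi.smul_apply, Matrix.mulVec_add, Matrix.mulVec_smul, h2 t ht, g2 t ht, smul_add]
      abel
    · simp only [Prod.fst_add, Prod.snd_add, Prod.smul_fst, Prod.smul_snd, Pi.add_apply,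
        Pi.smul_apply, Matrix.mulVec_add, Matrix.mulVec_smul]
      rw [add_add_add_comm, h3, ← smul_add, g3]
      simp
  have hclin : ∀ s s' (r : ℝ) d, coord (s + r • s') d = coord s d + r * coord s' d := by
    intro s s' r d
    rcases d with d | d <;> simp [hcoord]
  have h0 : ∀ i, (0 : (Fin T → Fin Nx → ℝ) × (Fin T → Fin Nu → ℝ)) ∈ K i := by
    intro i
    rw [hK, Set.mem_setOf_eq, hS]
    refine ⟨⟨by simp, by simp, by simp⟩, ?_⟩
    rintro (d | d) _ <;> simp [hcoord]
  have hlin : ∀ i, ∀ a ∈ K i, ∀ b ∈ K i, ∀ r : ℝ, a + r • b ∈ K i := by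
    intro i a ha b hb r
    rw [hK] at ha hb ⊢
    refine ⟨by simpa using hSlin _ _ _ _ ha.1 hb.1 r, fun d hd => ?_⟩
    rw [hclin, ha.2 d hd, hb.2 d hd]
    simp
  choose c hc using hCne
  have hCK : ∀ i, ∀ s, s ∈ C i ↔ s - c i ∈ K i := by
    intro i s
    have hci := hc i
    rw [hC] at hci
    rw [hC, hK]
    constructor
    · intro h
      have e : s - c i = s + (-1 : ℝ) • c i := by simp [sub_eq_add_neg]
      rw [e]
      refine ⟨by simpa using hSlin _ _ _ _ h.1 hci.1 (-1), fun d hd => ?_⟩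
      rw [hclin, h.2 d hd, hci.2 d hd]
      simp
    · intro h
      have e : s = c i + (1 : ℝ) • (s - c i) := by simp
      rw [e]
      refine ⟨by simpa only [smul_zero, add_zero] using hSlin _ _ _ _ hci.1 h.1 1,
        fun d hd => ?_⟩
      rw [hclin, h.2 d hd, hci.2 d hd]
      simp
  have main := fun x0 : Fin Nx → ℝ =>
    (hTset x0).trans (aux_translate K h0 hlin C c hCK x0)
  refine ⟨fun x0 => ⟨_, main x0⟩, fun x0 hx => ?_⟩
  have hU : (⋃ i ∈ { i : Fin Nx | x0 i ≠ 0 }, K i) = ⋃ i, K i := by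
    simp [hx]
  have h := main x0
  rw [hU] at h
  have h2 : Tset x0 = (AffineSubspace.mk' (∑ i, x0 i • c i)
      (Submodule.span ℝ (⋃ i, K i)) : Set _) := by
    rw [h]
    ext s
    simp only [Set.mem_image, SetLike.mem_coe, AffineSubspace.mem_mk', vsub_eq_sub]
    constructor
    · rintro ⟨v, hv, rfl⟩
      simpa using hv
    · intro hs
      exact ⟨_, hs, by simp⟩
  rw [h2, AffineSubspace.affineSpan_coe, AffineSubspace.direction_mk']
end

section
/- (Theorem 2: optimality of constrained systems.) Assume (feasibility) each per-column feasible set C_i, i = 1,…,Nx, is nonempty, and (rank condition) dim (K_1 + K_2 + … + K_{Nx}) = dim S(0). Then for Lebesgue-almost every x0 ∈ ℝ^{Nx}, the constrained and unconstrained feasible sets coincide: T(x0) = S(x0); indeed equality holds for every x0 all of whose coordinates are nonzero. -/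
open Matrix Finset MeasureTheory

/-- Theorem 2, optimality of constrained systems: if each per-column
feasible set `C_i` is nonempty and `dim (K_1 + … + K_{Nx}) = dim S(0)`, then
`T(x0) = S(x0)` for every `x0` with all coordinates nonzero, hence for Lebesgue-almost
every `x0`. -/
theorem optimality_of_constrained_systems {Nx Nu T : ℕ} (hT : 1 ≤ T)
    (A : Matrix (Fin Nx) (Fin Nx) ℝ) (B : Matrix (Fin Nx) (Fin Nu) ℝ)
    (S : (Fin Nx → ℝ) → Set ((Fin T → Fin Nx → ℝ) × (Fin T → Fin Nu → ℝ)))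
    (hS : ∀ x0 : Fin Nx → ℝ, S x0 = { su |
        su.1 ⟨0, by omega⟩ = x0 ∧
        (∀ t : ℕ, (ht : t + 1 < T) →
          su.1 ⟨t + 1, ht⟩ =
            A.mulVec (su.1 ⟨t, by omega⟩) + B.mulVec (su.2 ⟨t, by omega⟩)) ∧
        A.mulVec (su.1 ⟨T - 1, by omega⟩) + B.mulVec (su.2 ⟨T - 1, by omega⟩) = 0 })
    (R : Fin Nx → Set ((Fin T × Fin Nx) ⊕ (Fin T × Fin Nu)))
    (coord : ((Fin T → Fin Nx → ℝ) × (Fin T → Fin Nu → ℝ)) →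
      ((Fin T × Fin Nx) ⊕ (Fin T × Fin Nu)) → ℝ)
    (hcoord : ∀ su c, coord su c =
      Sum.elim (fun p : Fin T × Fin Nx => su.1 p.1 p.2)
        (fun p : Fin T × Fin Nu => su.2 p.1 p.2) c)
    (C : Fin Nx → Set ((Fin T → Fin Nx → ℝ) × (Fin T → Fin Nu → ℝ)))
    (hC : ∀ i, C i = { s ∈ S (Pi.single i 1) | ∀ c ∈ R i, coord s c = 0 })
    (K : Fin Nx → Set ((Fin T → Fin Nx → ℝ) × (Fin T → Fin Nu → ℝ)))
    (hK : ∀ i, K i = { k ∈ S 0 | ∀ c ∈ R i, coord k c = 0 })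
    (Tset : (Fin Nx → ℝ) → Set ((Fin T → Fin Nx → ℝ) × (Fin T → Fin Nu → ℝ)))
    (hTset : ∀ x0 : Fin Nx → ℝ, Tset x0 = { s |
        ∃ f : Fin Nx → (Fin T → Fin Nx → ℝ) × (Fin T → Fin Nu → ℝ),
          (∀ i, f i ∈ C i) ∧ s = ∑ i : Fin Nx, x0 i • f i })
    (hCne : ∀ i, (C i).Nonempty)
    (hrank : Module.finrank ℝ (Submodule.span ℝ (⋃ i : Fin Nx, K i))
      = Module.finrank ℝ (Submodule.span ℝ (S 0))) :
    (∀ x0 : Fin Nx → ℝ, (∀ i, x0 i ≠ 0) → Tset x0 = S x0) ∧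
    (∀ᵐ x0 : Fin Nx → ℝ, Tset x0 = S x0) := by
  have hlin : ∀ (a b : Fin Nx → ℝ) (c : ℝ) s s', s ∈ S a → s' ∈ S b → s + c • s' ∈ S (a + c • b) := by
    intro a b c s s' hs hs'
    rw [hS] at hs hs' ⊢
    obtain ⟨h1, h2, h3⟩ := hs
    obtain ⟨h1', h2', h3'⟩ := hs'
    refine ⟨?_, ?_, ?_⟩
    · simp [h1, h1']
    · intro t ht
      have e1 := h2 t ht
      have e2 := h2' t ht
      simp only [Prod.fst_add, Prod.snd_add, Prod.smul_fst, Prod.smul_snd, Pi.add_apply,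
        Pi.smul_apply, Matrix.mulVec_add, Matrix.mulVec_smul, e1, e2, smul_add]
      abel
    · simp only [Prod.fst_add, Prod.snd_add, Prod.smul_fst, Prod.smul_snd, Pi.add_apply,
        Pi.smul_apply, Matrix.mulVec_add, Matrix.mulVec_smul]
      have : ∀ p q r w : Fin Nx → ℝ, p + q = 0 → r + w = 0 →
          p + c • r + (q + c • w) = 0 := by
        intro p q r w h h'
        have : p + c • r + (q + c • w) = (p + q) + c • (r + w) := by rw [smul_add]; abel
        rw [this, h, h']; simp
      exact this _ _ _ _ h3 h3'
  have hzero : (0 : (Fin T → Fin Nx → ℝ) × (Fin T → Fin Nu → ℝ)) ∈ S 0 := by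
    rw [hS]; simp
  have hcl : ∀ s s' (c : ℝ) d, coord (s + c • s') d = coord s d + c * coord s' d := by
    intro s s' c d
    simp only [hcoord]
    cases d <;> simp
  have hc0 : ∀ d, coord 0 d = 0 := by
    intro d
    simp only [hcoord]
    cases d <;> simp
  have hK0 : ∀ i, 0 ∈ K i := by
    intro i; rw [hK]; exact ⟨hzero, fun c _ => hc0 c⟩
  have hKlin : ∀ i (c : ℝ) s s', s ∈ K i → s' ∈ K i → s + c • s' ∈ K i := by
    intro i c s s' hs hs'
    rw [hK] at hs hs' ⊢
    refine ⟨by simpa using hlin 0 0 c s s' hs.1 hs'.1, fun d hd => ?_⟩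
    rw [hcl, hs.2 d hd, hs'.2 d hd]; simp
  have hspan : Submodule.span ℝ (⋃ i : Fin Nx, K i) = Submodule.span ℝ (S 0) := by
    refine Submodule.eq_of_le_of_finrank_eq (Submodule.span_mono ?_) hrank
    refine Set.iUnion_subset fun i => ?_
    rw [hK]; exact fun x hx => hx.1
  have hdec : ∀ s ∈ S 0, ∃ k : Fin Nx → (Fin T → Fin Nx → ℝ) × (Fin T → Fin Nu → ℝ),
      (∀ i, k i ∈ K i) ∧ s = ∑ i, k i := by
    intro s hs
    have hs' : s ∈ Submodule.span ℝ (⋃ i : Fin Nx, K i) := by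
      rw [hspan]; exact Submodule.subset_span hs
    induction hs' using Submodule.span_induction with
    | mem x hx =>
      obtain ⟨i, hi⟩ := Set.mem_iUnion.1 hx
      refine ⟨Pi.single i x, fun j => ?_, by simp⟩
      by_cases h : j = i
      · subst h; simpa using hi
      · simpa [h] using hK0 j
    | zero => exact ⟨0, hK0, by simp⟩
    | add x y hx hy ihx ihy =>
      have m : ∀ z ∈ Submodule.span ℝ (⋃ i : Fin Nx, K i), z ∈ S 0 := by
        intro z hz
        rw [hspan] at hz
        induction hz using Submodule.span_induction with
        | mem x hx => exact hx
        | zero => exact hzero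
        | add x y _ _ h h' => simpa using hlin 0 0 1 x y h h'
        | smul a x _ h => simpa using hlin 0 0 a 0 x hzero h
      obtain ⟨k, hk, rfl⟩ := ihx (m _ hx)
      obtain ⟨l, hl, rfl⟩ := ihy (m _ hy)
      exact ⟨fun i => k i + l i, fun i => by simpa using hKlin i 1 _ _ (hk i) (hl i),
        by rw [Finset.sum_add_distrib]⟩
    | smul a x hx ihx =>
      have m : ∀ z ∈ Submodule.span ℝ (⋃ i : Fin Nx, K i), z ∈ S 0 := by
        intro z hz
        rw [hspan] at hz
        induction hz using Submodule.span_induction with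
        | mem x hx => exact hx
        | zero => exact hzero
        | add x y _ _ h h' => simpa using hlin 0 0 1 x y h h'
        | smul a x _ h => simpa using hlin 0 0 a 0 x hzero h
      obtain ⟨k, hk, rfl⟩ := ihx (m _ hx)
      exact ⟨fun i => a • k i, fun i => by simpa using hKlin i a _ _ (hK0 i) (hk i),
        by rw [Finset.smul_sum]⟩
  have hsum : ∀ (x0 : Fin Nx → ℝ) (f : Fin Nx → (Fin T → Fin Nx → ℝ) × (Fin T → Fin Nu → ℝ)),
      (∀ i, f i ∈ C i) → ∑ i, x0 i • f i ∈ S x0 := by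
    intro x0 f hf
    have key : ∀ F : Finset (Fin Nx), ∑ i ∈ F, x0 i • f i ∈
        S (∑ i ∈ F, x0 i • (Pi.single i 1 : Fin Nx → ℝ)) := by
      intro F
      induction F using Finset.induction_on with
      | empty => simpa using hzero
      | insert a F ha ih =>
        rw [Finset.sum_insert ha, Finset.sum_insert ha, add_comm, add_comm (x0 a • f a)]
        have := hf a
        rw [hC] at this
        exact hlin _ _ _ _ _ ih this.1
    have h := key Finset.univ
    have e : ∑ i, x0 i • (Pi.single i 1 : Fin Nx → ℝ) = x0 := by
      ext j; simp [Finset.sum_apply, Pi.single_apply]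
    rwa [e] at h
  have main : ∀ x0 : Fin Nx → ℝ, (∀ i, x0 i ≠ 0) → Tset x0 = S x0 := by
    intro x0 hx0
    rw [hTset]
    ext s
    constructor
    · rintro ⟨f, hf, rfl⟩
      exact hsum x0 f hf
    · intro hs
      choose g hg using hCne
      have hd := hlin _ _ (-1) _ _ hs (hsum x0 g hg)
      have e : x0 + (-1 : ℝ) • x0 = 0 := by simp
      rw [e] at hd
      obtain ⟨k, hk, hks⟩ := hdec _ hd
      refine ⟨fun i => g i + (x0 i)⁻¹ • k i, fun i => ?_, ?_⟩
      · have h1 := hg i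
        have h2 := hk i
        rw [hC] at h1 ⊢
        rw [hK] at h2
        refine ⟨by simpa using hlin _ _ (x0 i)⁻¹ _ _ h1.1 h2.1, fun d hd => ?_⟩
        rw [hcl, h1.2 d hd, h2.2 d hd]; simp
      · have : ∀ i, x0 i • (g i + (x0 i)⁻¹ • k i) = x0 i • g i + k i := by
          intro i
          rw [smul_add, smul_inv_smul₀ (hx0 i)]
        simp only [this]
        rw [Finset.sum_add_distrib, ← hks]
        simp
  refine ⟨main, ?_⟩
  have hae : ∀ᵐ x0 : Fin Nx → ℝ, ∀ i, x0 i ≠ 0 := by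
    rw [MeasureTheory.ae_all_iff]
    intro i
    have := MeasureTheory.Measure.ae_eval_ne (μ := fun _ : Fin Nx => (volume : Measure ℝ)) i 0
    exact this
  filter_upwards [hae] with x0 h using main x0 h
end

section
/- (Corollary 1, cost form.) Assume each per-column feasible set C_i, i = 1,…,Nx, is nonempty and dim (K_1 + … + K_{Nx}) = dim S(0). Then for every convex cost function f : V → ℝ and for Lebesgue-almost every x0 ∈ ℝ^{Nx}, the infimum of f over the constrained feasible set T(x0) equals the infimum of f over the unconstrained feasible set S(x0); i.e., the unconstrained optimal cost is achieved under the system level constraints for almost every initial condition. -/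
open Matrix Finset MeasureTheory

/-- Corollary 1, cost form: if each per-column feasible set `C_i` is
nonempty and `dim (K_1 + … + K_{Nx}) = dim S(0)`, then for every convex cost `f` and
Lebesgue-almost every `x0`, the infimum of `f` over the constrained feasible set `T(x0)`
equals its infimum over the unconstrained feasible set `S(x0)`. -/
theorem constrained_cost_optimality {Nx Nu T : ℕ} (hT : 1 ≤ T)
    (A : Matrix (Fin Nx) (Fin Nx) ℝ) (B : Matrix (Fin Nx) (Fin Nu) ℝ)
    (S : (Fin Nx → ℝ) → Set ((Fin T → Fin Nx → ℝ) × (Fin T → Fin Nu → ℝ)))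
    (hS : ∀ x0 : Fin Nx → ℝ, S x0 = { su |
        su.1 ⟨0, by omega⟩ = x0 ∧
        (∀ t : ℕ, (ht : t + 1 < T) →
          su.1 ⟨t + 1, ht⟩ =
            A.mulVec (su.1 ⟨t, by omega⟩) + B.mulVec (su.2 ⟨t, by omega⟩)) ∧
        A.mulVec (su.1 ⟨T - 1, by omega⟩) + B.mulVec (su.2 ⟨T - 1, by omega⟩) = 0 })
    (R : Fin Nx → Set ((Fin T × Fin Nx) ⊕ (Fin T × Fin Nu)))
    (coord : ((Fin T → Fin Nx → ℝ) × (Fin T → Fin Nu → ℝ)) →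
      ((Fin T × Fin Nx) ⊕ (Fin T × Fin Nu)) → ℝ)
    (hcoord : ∀ su c, coord su c =
      Sum.elim (fun p : Fin T × Fin Nx => su.1 p.1 p.2)
        (fun p : Fin T × Fin Nu => su.2 p.1 p.2) c)
    (C : Fin Nx → Set ((Fin T → Fin Nx → ℝ) × (Fin T → Fin Nu → ℝ)))
    (hC : ∀ i, C i = { s ∈ S (Pi.single i 1) | ∀ c ∈ R i, coord s c = 0 })
    (K : Fin Nx → Set ((Fin T → Fin Nx → ℝ) × (Fin T → Fin Nu → ℝ)))
    (hK : ∀ i, K i = { k ∈ S 0 | ∀ c ∈ R i, coord k c = 0 })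
    (Tset : (Fin Nx → ℝ) → Set ((Fin T → Fin Nx → ℝ) × (Fin T → Fin Nu → ℝ)))
    (hTset : ∀ x0 : Fin Nx → ℝ, Tset x0 = { s |
        ∃ f : Fin Nx → (Fin T → Fin Nx → ℝ) × (Fin T → Fin Nu → ℝ),
          (∀ i, f i ∈ C i) ∧ s = ∑ i : Fin Nx, x0 i • f i })
    (hCne : ∀ i, (C i).Nonempty)
    (hrank : Module.finrank ℝ (Submodule.span ℝ (⋃ i : Fin Nx, K i))
      = Module.finrank ℝ (Submodule.span ℝ (S 0)))
    (f : ((Fin T → Fin Nx → ℝ) × (Fin T → Fin Nu → ℝ)) → ℝ)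
    (hf : ConvexOn ℝ Set.univ f) :
    ∀ᵐ x0 : Fin Nx → ℝ, sInf (f '' Tset x0) = sInf (f '' S x0) := by
  have hadd : ∀ x y s s', s ∈ S x → s' ∈ S y → s + s' ∈ S (x + y) := by
    intro x y s s' h h'
    rw [hS] at h h' ⊢
    obtain ⟨h1, h2, h3⟩ := h
    obtain ⟨h1', h2', h3'⟩ := h'
    refine ⟨?_, ?_, ?_⟩
    · simp [h1, h1']
    · intro t ht
      simp only [Prod.fst_add, Prod.snd_add, Pi.add_apply, h2 t ht, h2' t ht, Matrix.mulVec_add]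
      abel
    · simp only [Prod.fst_add, Prod.snd_add, Pi.add_apply, Matrix.mulVec_add]
      rw [add_add_add_comm, h3, h3', add_zero]
  have hsmul : ∀ (c : ℝ) x s, s ∈ S x → c • s ∈ S (c • x) := by
    intro c x s h
    rw [hS] at h ⊢
    obtain ⟨h1, h2, h3⟩ := h
    refine ⟨?_, ?_, ?_⟩
    · simp [h1]
    · intro t ht
      simp only [Prod.smul_fst, Prod.smul_snd, Pi.smul_apply, h2 t ht, Matrix.mulVec_smul, smul_add]
    · simp only [Prod.smul_fst, Prod.smul_snd, Pi.smul_apply, Matrix.mulVec_smul]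
      rw [← smul_add, h3, smul_zero]
  have h0 : (0 : (Fin T → Fin Nx → ℝ) × (Fin T → Fin Nu → ℝ)) ∈ S 0 := by
    rw [hS]; simp
  have hcadd : ∀ s s' c, coord (s + s') c = coord s c + coord s' c := by
    intro s s' c
    simp only [hcoord]
    rcases c with c | c <;> simp
  have hcsmul : ∀ (a : ℝ) s c, coord (a • s) c = a * coord s c := by
    intro a s c
    simp only [hcoord]
    rcases c with c | c <;> simp
  have hsum : ∀ (x0 : Fin Nx → ℝ) (g : Fin Nx → (Fin T → Fin Nx → ℝ) × (Fin T → Fin Nu → ℝ)),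
      (∀ i, g i ∈ C i) → ∑ i, x0 i • g i ∈ S x0 := by
    intro x0 g hg
    have key : ∀ F : Finset (Fin Nx),
        ∑ i ∈ F, x0 i • g i ∈ S (∑ i ∈ F, x0 i • (Pi.single i 1 : Fin Nx → ℝ)) := by
      intro F
      induction F using Finset.induction_on with
      | empty => simpa using h0
      | insert a F ha ih =>
        rw [Finset.sum_insert ha, Finset.sum_insert ha]
        refine hadd _ _ _ _ (hsmul _ _ _ ?_) ih
        have := hg a
        rw [hC] at this
        exact this.1
    have h := key Finset.univ
    rwa [← pi_eq_sum_univ' x0] at h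
  let S0 : Submodule ℝ ((Fin T → Fin Nx → ℝ) × (Fin T → Fin Nu → ℝ)) :=
    { carrier := S 0
      add_mem' := fun {a b} ha hb => by simpa using hadd _ _ _ _ ha hb
      zero_mem' := h0
      smul_mem' := fun c x hx => by simpa using hsmul c _ _ hx }
  let K' : Fin Nx → Submodule ℝ ((Fin T → Fin Nx → ℝ) × (Fin T → Fin Nu → ℝ)) := fun i =>
    { carrier := K i
      add_mem' := fun {a b} ha hb => by
        rw [hK] at ha hb ⊢
        refine ⟨by simpa using hadd _ _ _ _ ha.1 hb.1, fun c hc => ?_⟩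
        rw [hcadd, ha.2 c hc, hb.2 c hc, add_zero]
      zero_mem' := by
        rw [hK]
        refine ⟨h0, fun c _ => ?_⟩
        rw [hcoord]
        rcases c with c | c <;> simp
      smul_mem' := fun a x hx => by
        rw [hK] at hx ⊢
        refine ⟨by simpa using hsmul a _ _ hx.1, fun c hc => ?_⟩
        rw [hcsmul, hx.2 c hc, mul_zero] }
  have hle : Submodule.span ℝ (⋃ i : Fin Nx, K i) ≤ Submodule.span ℝ (S 0) := by
    apply Submodule.span_mono
    refine Set.iUnion_subset fun i => ?_
    rw [hK]
    exact fun x hx => hx.1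
  have heq := Submodule.eq_of_le_of_finrank_eq hle hrank
  have hsp : Submodule.span ℝ (⋃ i : Fin Nx, K i) = ⨆ i, K' i := by
    rw [Submodule.span_iUnion]
    exact iSup_congr fun i => Submodule.span_eq (K' i)
  have hdec : ∀ d ∈ S 0, ∃ g : Fin Nx → (Fin T → Fin Nx → ℝ) × (Fin T → Fin Nu → ℝ),
      (∀ i, g i ∈ K i) ∧ ∑ i, g i = d := by
    intro d hd
    have hd' : d ∈ ⨆ i, K' i := by
      rw [← hsp, heq]
      exact Submodule.subset_span hd
    rw [Submodule.mem_iSup_iff_exists_finsupp] at hd'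
    obtain ⟨g, hg, hgs⟩ := hd'
    refine ⟨g, hg, ?_⟩
    rw [← hgs, Finsupp.sum_fintype _ _ (fun _ => rfl)]
  have hae : ∀ᵐ x0 : Fin Nx → ℝ, ∀ i, x0 i ≠ 0 := by
    rw [ae_all_iff]
    intro i
    exact Measure.ae_eval_ne (fun _ : Fin Nx => (volume : Measure ℝ)) i 0
  filter_upwards [hae] with x0 hx0
  have : Tset x0 = S x0 := by
    rw [hTset]
    ext s
    constructor
    · rintro ⟨g, hg, rfl⟩
      exact hsum x0 g hg
    · intro hs
      choose p hp using hCne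
      have hd : s + (-1 : ℝ) • ∑ i, x0 i • p i ∈ S 0 := by
        have := hadd _ _ _ _ hs (hsmul (-1) _ _ (hsum x0 p hp))
        simpa using this
      obtain ⟨g, hg, hgs⟩ := hdec _ hd
      refine ⟨fun i => p i + (x0 i)⁻¹ • g i, fun i => ?_, ?_⟩
      · have h1 := hp i
        have h2 := hg i
        rw [hC] at h1 ⊢
        rw [hK] at h2
        refine ⟨by simpa using hadd _ _ _ _ h1.1 (hsmul (x0 i)⁻¹ _ _ h2.1), fun c hc => ?_⟩
        rw [hcadd, hcsmul, h1.2 c hc, h2.2 c hc, mul_zero, add_zero]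
      · have : ∀ i, x0 i • (p i + (x0 i)⁻¹ • g i) = x0 i • p i + g i := fun i => by
          rw [smul_add, smul_inv_smul₀ (hx0 i)]
        simp only [this]
        rw [Finset.sum_add_distrib, hgs]
        module
  rw [this]
end

section
/- (Corollary 1, controllability form: V_c = Y_c².) Assume each per-column feasible set C_i, i = 1,…,Nx, is nonempty, dim (K_1 + … + K_{Nx}) = dim S(0), A is invertible, and the controllability Gramian W_c = Σ_{i=0}^{T−1} A^i B Bᵀ (Aᵀ)^i is invertible. Define the constrained minimum control energy h_T(x0) := inf { Σ_{t=0}^{T−1} ‖u(t)‖² : (x,u) ∈ T(x0) }. Then the Lebesgue volume of the set { A^T x0 : x0 ∈ ℝ^{Nx}, h_T(x0) ≤ 1 } equals √(det W_c) times the volume of the Euclidean unit ball in ℝ^{Nx}; i.e., the constrained controllability Y_c satisfies Y_c² = det W_c = V_c, the unconstrained classical controllability. -/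
open Matrix Finset MeasureTheory

theorem aux_traj {Nx Nu T : ℕ} (A : Matrix (Fin Nx) (Fin Nx) ℝ) (B : Matrix (Fin Nx) (Fin Nu) ℝ)
    (u : Fin T → Fin Nu → ℝ) (x : ℕ → Fin Nx → ℝ)
    (hx : ∀ t (ht : t < T), x (t+1) = A *ᵥ x t + B *ᵥ u ⟨t, ht⟩) :
    ∀ n (hn : n ≤ T), x n = A ^ n *ᵥ x 0 +
      ∑ t : Fin n, (A ^ (n - 1 - (t : ℕ)) * B) *ᵥ u ⟨t, by omega⟩ := by
  intro n
  induction n with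
  | zero => intro _; simp
  | succ n ih =>
    intro hn
    rw [hx n (by omega), ih (by omega), Fin.sum_univ_castSucc, Matrix.mulVec_add,
      Matrix.mulVec_mulVec, ← pow_succ', Matrix.mulVec_sum, add_assoc]
    congr 2
    · apply Finset.sum_congr rfl
      intro t _
      have : n + 1 - 1 - (t.castSucc : ℕ) = (n - 1 - (t : ℕ)) + 1 := by
        simp; omega
      rw [this, Matrix.mulVec_mulVec, pow_succ', Matrix.mul_assoc]
      rfl
    · simp

theorem aux_S {Nx Nu T : ℕ} (hT : 1 ≤ T) (q0 : 0 < T) (q1 : T - 1 < T) (A : Matrix (Fin Nx) (Fin Nx) ℝ)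
    (B : Matrix (Fin Nx) (Fin Nu) ℝ) (x0 : Fin Nx → ℝ) (u : Fin T → Fin Nu → ℝ) :
    (∃ x : Fin T → Fin Nx → ℝ, x ⟨0, q0⟩ = x0 ∧
        (∀ t : ℕ, (ht : t + 1 < T) →
          x ⟨t + 1, ht⟩ =
            A.mulVec (x ⟨t, Nat.lt_of_succ_lt ht⟩) + B.mulVec (u ⟨t, Nat.lt_of_succ_lt ht⟩)) ∧
        A.mulVec (x ⟨T - 1, q1⟩) + B.mulVec (u ⟨T - 1, q1⟩) = 0) ↔
    (A ^ T) *ᵥ x0 + ∑ t : Fin T, (A ^ (T - 1 - (t : ℕ)) * B) *ᵥ u t = 0 := by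
  constructor
  · rintro ⟨x, h0, h1, h2⟩
    have := aux_traj A B u (fun t => if h : t < T then x ⟨t, h⟩ else 0) (by
      intro t ht
      by_cases h : t + 1 < T
      · simp [h, ht, h1 t h]
      · obtain rfl : t = T - 1 := by omega
        simp only [h, ht, dite_true, dite_false, h2]) T le_rfl
    simp only [lt_irrefl, dite_false, show 0 < T by omega, dite_true, h0] at this
    exact this.symm
  · intro h
    let X : ℕ → Fin Nx → ℝ := fun n => Nat.rec x0
      (fun t p => A *ᵥ p + B *ᵥ (if h : t < T then u ⟨t, h⟩ else 0)) n
    have hX : ∀ t (ht : t < T), X (t+1) = A *ᵥ X t + B *ᵥ u ⟨t, ht⟩ := by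
      intro t ht
      show A *ᵥ X t + B *ᵥ (if h : t < T then u ⟨t, h⟩ else 0) = _
      simp [ht]
    refine ⟨fun t => X t, rfl, fun t ht => hX t (by omega), ?_⟩
    have h3 := aux_traj A B u X hX T le_rfl
    rw [show X 0 = x0 from rfl, h] at h3
    have h4 := hX (T - 1) (by omega)
    rw [show T - 1 + 1 = T by omega, h3] at h4
    exact h4.symm

theorem aux_gram {Nx Nu T : ℕ} (A : Matrix (Fin Nx) (Fin Nx) ℝ) (B : Matrix (Fin Nx) (Fin Nu) ℝ) :
    ∑ i ∈ Finset.range T, A ^ i * B * Bᵀ * Aᵀ ^ i =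
    ∑ t : Fin T, (A ^ (T - 1 - (t : ℕ)) * B) * (A ^ (T - 1 - (t : ℕ)) * B)ᵀ := by
  rw [← Finset.sum_range_reflect, Finset.sum_range]
  apply Finset.sum_congr rfl
  intro t _
  rw [Matrix.transpose_mul, Matrix.transpose_pow, Matrix.mul_assoc, Matrix.mul_assoc]

theorem aux_least {Nx Nu T : ℕ} (G : Fin T → Matrix (Fin Nx) (Fin Nu) ℝ)
    (W : Matrix (Fin Nx) (Fin Nx) ℝ) (hW : W = ∑ t, G t * (G t)ᵀ) (hd : IsUnit W.det)
    (y : Fin Nx → ℝ) :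
    IsLeast { e : ℝ | ∃ u : Fin T → Fin Nu → ℝ, y + ∑ t, G t *ᵥ u t = 0 ∧
      e = ∑ t, ∑ j, u t j ^ 2 } (y ⬝ᵥ (W⁻¹ *ᵥ y)) := by
  set z := W⁻¹ *ᵥ y with hz
  have hWz : W *ᵥ z = y := by
    rw [hz, Matrix.mulVec_mulVec, Matrix.mul_nonsing_inv _ hd, Matrix.one_mulVec]
  have hsum : ∑ t, G t *ᵥ ((G t)ᵀ *ᵥ z) = y := by
    conv_rhs => rw [← hWz, hW, Matrix.sum_mulVec]
    simp [Matrix.mulVec_mulVec]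
  have hpair : ∀ u : Fin T → Fin Nu → ℝ, ∑ t, ((G t)ᵀ *ᵥ z) ⬝ᵥ u t =
      z ⬝ᵥ ∑ t, G t *ᵥ u t := by
    intro u
    rw [dotProduct_sum]
    apply Finset.sum_congr rfl
    intro t _
    rw [Matrix.mulVec_transpose, Matrix.dotProduct_mulVec]
  have hen : ∑ t, ((G t)ᵀ *ᵥ z) ⬝ᵥ ((G t)ᵀ *ᵥ z) = y ⬝ᵥ z := by
    rw [hpair, hsum, dotProduct_comm]
  constructor
  · refine ⟨fun t => - ((G t)ᵀ *ᵥ z), ?_, ?_⟩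
    · simp only [Matrix.mulVec_neg, Finset.sum_neg_distrib, hsum, add_neg_cancel]
    · rw [← hen]
      simp [dotProduct, sq]
  · rintro e ⟨u, hu, rfl⟩
    have h1 : ∑ t, ((G t)ᵀ *ᵥ z) ⬝ᵥ u t = - (y ⬝ᵥ z) := by
      rw [hpair, eq_neg_of_add_eq_zero_right hu, dotProduct_neg, dotProduct_comm]
    have h2 : 0 ≤ ∑ t, ∑ j, (u t j + ((G t)ᵀ *ᵥ z) j) ^ 2 := by positivity
    have h3 : ∑ t, ∑ j, (u t j + ((G t)ᵀ *ᵥ z) j) ^ 2 = ∑ t, ∑ j, u t j ^ 2 +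
        2 * ∑ t, ((G t)ᵀ *ᵥ z) ⬝ᵥ u t + ∑ t, ((G t)ᵀ *ᵥ z) ⬝ᵥ ((G t)ᵀ *ᵥ z) := by
      simp only [dotProduct, Finset.mul_sum, ← Finset.sum_add_distrib]
      refine Finset.sum_congr rfl fun t _ => Finset.sum_congr rfl fun j _ => ?_
      ring
    rw [h3, h1, hen] at h2
    linarith

theorem aux_psd {Nx Nu T : ℕ} (G : Fin T → Matrix (Fin Nx) (Fin Nu) ℝ) :
    (∑ t, G t * (G t)ᵀ).PosSemidef := by
  apply Matrix.posSemidef_sum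
  intro t _
  simpa using Matrix.posSemidef_self_mul_conjTranspose (G t)

open scoped MatrixOrder Matrix.Norms.L2Operator in
theorem aux_vol {n : ℕ} (W : Matrix (Fin n) (Fin n) ℝ) (hW : W.PosSemidef) (hd : IsUnit W.det) :
    volume {y : EuclideanSpace ℝ (Fin n) | y.ofLp ⬝ᵥ (W⁻¹ *ᵥ y.ofLp) ≤ 1} =
      ENNReal.ofReal (Real.sqrt W.det) *
        volume (Metric.closedBall (0 : EuclideanSpace ℝ (Fin n)) 1) := by
  obtain ⟨L, hL⟩ := CStarAlgebra.nonneg_iff_eq_star_mul_self.mp hW.nonneg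
  rw [Matrix.star_eq_conjTranspose, Matrix.conjTranspose_eq_transpose_of_trivial] at hL
  have hdet : W.det = L.det ^ 2 := by rw [hL, Matrix.det_mul, Matrix.det_transpose, sq]
  have hLd : IsUnit L.det := by
    rw [hdet] at hd
    exact (isUnit_pow_iff two_ne_zero).mp hd
  let P : Matrix (Fin n) (Fin n) ℝ := (Lᵀ)⁻¹
  let φ : EuclideanSpace ℝ (Fin n) →ₗ[ℝ] EuclideanSpace ℝ (Fin n) := Matrix.toEuclideanLin P
  have hφd : LinearMap.det φ = (L.det)⁻¹ := by
    have : LinearMap.det φ = P.det := by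
      simp only [φ, Matrix.toLpLin_eq_toLin, LinearMap.det_toLin]
    rw [this, Matrix.det_nonsing_inv, Matrix.det_transpose, Ring.inverse_eq_inv']
  have hset : {y : EuclideanSpace ℝ (Fin n) | y.ofLp ⬝ᵥ (W⁻¹ *ᵥ y.ofLp) ≤ 1} =
      φ ⁻¹' (Metric.closedBall (0 : EuclideanSpace ℝ (Fin n)) 1) := by
    ext y
    have hq : y.ofLp ⬝ᵥ (W⁻¹ *ᵥ y.ofLp) = ‖φ y‖ ^ 2 := by
      rw [EuclideanSpace.real_norm_sq_eq]
      have h1 : W⁻¹ = Pᵀ * P := by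
        rw [hL, Matrix.mul_inv_rev, Matrix.transpose_nonsing_inv, Matrix.transpose_transpose]
      rw [h1, ← Matrix.mulVec_mulVec, Matrix.dotProduct_mulVec, Matrix.vecMul_transpose]
      simp [φ, dotProduct, sq]
    simp only [Set.mem_ofPred_eq, Set.mem_preimage, mem_closedBall_zero_iff, hq]
    rw [sq_le_one_iff₀ (norm_nonneg _)]
  rw [hset, Measure.addHaar_preimage_linearMap _ (by
    rw [hφd]; exact inv_ne_zero hLd.ne_zero), hφd, hdet, Real.sqrt_sq_eq_abs, inv_inv]

theorem aux_null_s13 {n : ℕ} (M : Matrix (Fin n) (Fin n) ℝ) (hM : IsUnit M.det) :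
    ∀ᵐ y : EuclideanSpace ℝ (Fin n), ∀ i, (M⁻¹ *ᵥ y.ofLp) i ≠ 0 := by
  rw [ae_all_iff]
  intro i
  let ψ : EuclideanSpace ℝ (Fin n) →ₗ[ℝ] ℝ :=
    (LinearMap.proj i).comp ((Matrix.toLin' M⁻¹).comp (WithLp.linearEquiv 2 ℝ (Fin n → ℝ)).toLinearMap)
  have hψ : ∀ y, ψ y = (M⁻¹ *ᵥ y.ofLp) i := fun y => by simp [ψ]
  have := Measure.addHaar_submodule (volume : Measure (EuclideanSpace ℝ (Fin n))) (LinearMap.ker ψ) (by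
    intro h
    have h1 : WithLp.toLp 2 (M *ᵥ (Pi.single i 1)) ∈ LinearMap.ker ψ := by rw [h]; trivial
    rw [LinearMap.mem_ker, hψ] at h1
    rw [Matrix.mulVec_mulVec, Matrix.nonsing_inv_mul _ hM, Matrix.one_mulVec] at h1
    simp at h1)
  rw [ae_iff]
  convert this using 2
  ext y
  simp [hψ]

/-- Corollary 1, controllability form `V_c = Y_c²`: under feasibility of
each `C_i`, the rank condition `dim (K_1 + … + K_{Nx}) = dim S(0)`, invertibility of `A`
and of the Gramian `W_c`, the Lebesgue volume of `{ A^T x0 : h_T(x0) ≤ 1 }` — where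
`h_T(x0)` is the minimum control energy over the constrained feasible set `T(x0)` —
equals `√(det W_c)` times the volume of the Euclidean unit ball, i.e. `Y_c² = det W_c = V_c`. -/
theorem constrained_controllability_equals_classical {Nx Nu T : ℕ} (hT : 1 ≤ T)
    (A : Matrix (Fin Nx) (Fin Nx) ℝ) (B : Matrix (Fin Nx) (Fin Nu) ℝ)
    (S : (Fin Nx → ℝ) → Set ((Fin T → Fin Nx → ℝ) × (Fin T → Fin Nu → ℝ)))
    (hS : ∀ x0 : Fin Nx → ℝ, S x0 = { su |
        su.1 ⟨0, by omega⟩ = x0 ∧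
        (∀ t : ℕ, (ht : t + 1 < T) →
          su.1 ⟨t + 1, ht⟩ =
            A.mulVec (su.1 ⟨t, by omega⟩) + B.mulVec (su.2 ⟨t, by omega⟩)) ∧
        A.mulVec (su.1 ⟨T - 1, by omega⟩) + B.mulVec (su.2 ⟨T - 1, by omega⟩) = 0 })
    (R : Fin Nx → Set ((Fin T × Fin Nx) ⊕ (Fin T × Fin Nu)))
    (coord : ((Fin T → Fin Nx → ℝ) × (Fin T → Fin Nu → ℝ)) →
      ((Fin T × Fin Nx) ⊕ (Fin T × Fin Nu)) → ℝ)
    (hcoord : ∀ su c, coord su c =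
      Sum.elim (fun p : Fin T × Fin Nx => su.1 p.1 p.2)
        (fun p : Fin T × Fin Nu => su.2 p.1 p.2) c)
    (C : Fin Nx → Set ((Fin T → Fin Nx → ℝ) × (Fin T → Fin Nu → ℝ)))
    (hC : ∀ i, C i = { s ∈ S (Pi.single i 1) | ∀ c ∈ R i, coord s c = 0 })
    (K : Fin Nx → Set ((Fin T → Fin Nx → ℝ) × (Fin T → Fin Nu → ℝ)))
    (hK : ∀ i, K i = { k ∈ S 0 | ∀ c ∈ R i, coord k c = 0 })
    (Tset : (Fin Nx → ℝ) → Set ((Fin T → Fin Nx → ℝ) × (Fin T → Fin Nu → ℝ)))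
    (hTset : ∀ x0 : Fin Nx → ℝ, Tset x0 = { s |
        ∃ f : Fin Nx → (Fin T → Fin Nx → ℝ) × (Fin T → Fin Nu → ℝ),
          (∀ i, f i ∈ C i) ∧ s = ∑ i : Fin Nx, x0 i • f i })
    (hCne : ∀ i, (C i).Nonempty)
    (hrank : Module.finrank ℝ (Submodule.span ℝ (⋃ i : Fin Nx, K i))
      = Module.finrank ℝ (Submodule.span ℝ (S 0)))
    (hA : IsUnit A.det)
    (Wc : Matrix (Fin Nx) (Fin Nx) ℝ)
    (hWc : Wc = ∑ i ∈ Finset.range T, A ^ i * B * Bᵀ * Aᵀ ^ i)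
    (hWcInv : IsUnit Wc.det)
    (hTfun : (Fin Nx → ℝ) → ℝ)
    (hhT : ∀ x0 : Fin Nx → ℝ, hTfun x0 = sInf
      { e : ℝ | ∃ su ∈ Tset x0, e = ∑ t : Fin T, ∑ j : Fin Nu, su.2 t j ^ 2 }) :
    volume { y : EuclideanSpace ℝ (Fin Nx) |
        ∃ x0 : Fin Nx → ℝ, (fun i => y i) = (A ^ T).mulVec x0 ∧ hTfun x0 ≤ 1 }
      = ENNReal.ofReal (Real.sqrt Wc.det) *
        volume (Metric.closedBall (0 : EuclideanSpace ℝ (Fin Nx)) 1) := by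
  have hcl : ∃ E : Submodule ℝ (((Fin T → Fin Nx → ℝ) × (Fin T → Fin Nu → ℝ)) × (Fin Nx → ℝ)),
      ∀ s x0, (s, x0) ∈ E ↔ s ∈ S x0 := by
    refine ⟨{ carrier := {p | p.1 ∈ S p.2}, add_mem' := ?_, zero_mem' := ?_, smul_mem' := ?_ },
      fun s x0 => Iff.rfl⟩
    · rintro ⟨a, x⟩ ⟨b, y⟩ ha hb
      simp only [Set.mem_ofPred_eq, hS] at ha hb ⊢
      obtain ⟨a0, a1, a2⟩ := ha
      obtain ⟨b0, b1, b2⟩ := hb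
      refine ⟨by simp [a0, b0], fun t ht => ?_, ?_⟩
      · simp only [Prod.mk_add_mk, Prod.fst_add, Prod.snd_add, Pi.add_apply, a1 t ht, b1 t ht,
          Matrix.mulVec_add]
        abel
      · simp only [Prod.mk_add_mk, Prod.fst_add, Prod.snd_add, Pi.add_apply, Matrix.mulVec_add]
        rw [add_add_add_comm, a2, b2, add_zero]
    · simp only [Set.mem_ofPred_eq, hS]
      simp
    · rintro c ⟨a, x⟩ ha
      simp only [Set.mem_ofPred_eq, hS] at ha ⊢
      obtain ⟨a0, a1, a2⟩ := ha
      refine ⟨by simp [a0], fun t ht => ?_, ?_⟩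
      · simp only [Prod.smul_mk, Prod.smul_fst, Prod.smul_snd, Pi.smul_apply, a1 t ht,
          Matrix.mulVec_smul, smul_add]
      · simp only [Prod.smul_mk, Prod.smul_fst, Prod.smul_snd, Pi.smul_apply, Matrix.mulVec_smul]
        rw [← smul_add, a2, smul_zero]
  obtain ⟨E, hE⟩ := hcl
  have hcomb : ∀ (x0 : Fin Nx → ℝ) (f : Fin Nx → (Fin T → Fin Nx → ℝ) × (Fin T → Fin Nu → ℝ)),
      (∀ i, f i ∈ C i) → ∑ i, x0 i • f i ∈ S x0 := by
    intro x0 f hf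
    rw [← hE]
    have h1 : ∑ i, x0 i • (f i, (Pi.single i 1 : Fin Nx → ℝ)) ∈ E := by
      refine Submodule.sum_mem _ fun i _ => Submodule.smul_mem _ _ ?_
      rw [hE]
      have := hf i
      rw [hC] at this
      exact this.1
    have h2 : (∑ i, x0 i • f i, x0) = ∑ i, x0 i • (f i, (Pi.single i 1 : Fin Nx → ℝ)) := by
      apply Prod.ext
      · simp [Prod.fst_sum]
      · simp only [Prod.snd_sum, Prod.smul_snd]
        exact pi_eq_sum_univ' x0
    rw [h2]
    exact h1
  have hcadd : ∀ c a b, coord (a + b) c = coord a c + coord b c := by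
    intro c a b; rcases c with c | c <;> simp [hcoord]
  have hcsmul : ∀ c (r : ℝ) a, coord (r • a) c = r * coord a c := by
    intro c r a; rcases c with c | c <;> simp [hcoord]
  have hKsub : ∀ i, ∃ K' : Submodule ℝ ((Fin T → Fin Nx → ℝ) × (Fin T → Fin Nu → ℝ)),
      (K' : Set _) = K i := by
    intro i
    refine ⟨{ carrier := K i, add_mem' := ?_, zero_mem' := ?_, smul_mem' := ?_ }, rfl⟩
    · intro a b ha hb
      rw [hK] at ha hb ⊢
      refine ⟨?_, fun c hc => by rw [hcadd, ha.2 c hc, hb.2 c hc, add_zero]⟩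
      have := E.add_mem ((hE _ _).2 ha.1) ((hE _ _).2 hb.1)
      rw [← hE]; simpa using this
    · rw [hK]
      refine ⟨(hE _ _).1 E.zero_mem, fun c hc => ?_⟩
      have := hcsmul c 0 0
      simpa using this
    · intro r a ha
      rw [hK] at ha ⊢
      refine ⟨?_, fun c hc => by rw [hcsmul, ha.2 c hc, mul_zero]⟩
      have := E.smul_mem r ((hE _ _).2 ha.1)
      rw [← hE]; simpa using this
  choose K' hK' using hKsub
  have hspan : Submodule.span ℝ (⋃ i : Fin Nx, K i) = Submodule.span ℝ (S 0) := by
    apply Submodule.eq_of_le_of_finrank_eq _ hrank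
    apply Submodule.span_mono
    apply Set.iUnion_subset
    intro i a ha
    rw [hK] at ha
    exact ha.1
  have hspan2 : Submodule.span ℝ (⋃ i : Fin Nx, K i) = ⨆ i, K' i := by
    rw [Submodule.span_iUnion]
    congr 1
    ext1 i
    rw [← hK', Submodule.span_eq]
  have hTS : ∀ x0 : Fin Nx → ℝ, (∀ i, x0 i ≠ 0) → Tset x0 = S x0 := by
    intro x0 hx0
    rw [hTset]
    apply Set.Subset.antisymm
    · rintro s ⟨f, hf, rfl⟩
      exact hcomb x0 f hf
    · intro s hs
      choose g hg using hCne
      have hd : s - ∑ i, x0 i • g i ∈ S 0 := by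
        have := E.sub_mem ((hE _ _).2 hs) ((hE _ _).2 (hcomb x0 g hg))
        rw [← hE]; simpa using this
      have hd2 : s - ∑ i, x0 i • g i ∈ ⨆ i, K' i := by
        rw [← hspan2, hspan]; exact Submodule.subset_span hd
      obtain ⟨k, hk, hks⟩ : ∃ k : Fin Nx → (Fin T → Fin Nx → ℝ) × (Fin T → Fin Nu → ℝ),
          (∀ i, k i ∈ K i) ∧ ∑ i, k i = s - ∑ i, x0 i • g i := by
        obtain ⟨k, hk, hks⟩ := (Submodule.mem_iSup_iff_exists_finsupp K' _).1 hd2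
        refine ⟨k, fun i => by rw [← hK']; exact hk i, ?_⟩
        rw [← hks, Finsupp.sum_fintype _ _ (by simp)]
      refine ⟨fun i => g i + (x0 i)⁻¹ • k i, fun i => ?_, ?_⟩
      · have h1 := hg i
        have h2 := hk i
        rw [hC] at h1 ⊢
        rw [hK] at h2
        refine ⟨?_, fun c hc => by rw [hcadd, hcsmul, h1.2 c hc, h2.2 c hc, mul_zero, add_zero]⟩
        have := E.add_mem ((hE _ _).2 h1.1) (E.smul_mem (x0 i)⁻¹ ((hE _ _).2 h2.1))
        rw [← hE]; simpa using this
      · simp only [smul_add, smul_smul, mul_inv_cancel₀ (hx0 _), one_smul,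
          Finset.sum_add_distrib, hks]
        abel
  have hAT : IsUnit (A ^ T).det := by rw [Matrix.det_pow]; exact hA.pow T
  have hkey : ∀ x0 : Fin Nx → ℝ, (∀ i, x0 i ≠ 0) →
      hTfun x0 = ((A ^ T) *ᵥ x0) ⬝ᵥ (Wc⁻¹ *ᵥ ((A ^ T) *ᵥ x0)) := by
    intro x0 hx0
    rw [hhT, hTS x0 hx0]
    rw [← (aux_least (fun t : Fin T => A ^ (T - 1 - (t : ℕ)) * B) Wc (hWc.trans (aux_gram A B))
      hWcInv ((A ^ T) *ᵥ x0)).csInf_eq]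
    congr 1
    ext e
    simp only [Set.mem_ofPred_eq, ← aux_S hT (Nat.lt_of_lt_of_le Nat.one_pos hT) (Nat.sub_lt (Nat.lt_of_lt_of_le Nat.one_pos hT) Nat.one_pos), hS]
    constructor
    · rintro ⟨⟨x, u⟩, h, rfl⟩
      exact ⟨u, ⟨x, h⟩, rfl⟩
    · rintro ⟨u, ⟨x, h⟩, rfl⟩
      exact ⟨(x, u), h, rfl⟩
  rw [← aux_vol Wc (by rw [hWc, aux_gram]; exact aux_psd _) hWcInv]
  apply measure_congr
  filter_upwards [aux_null_s13 (A ^ T) hAT] with y hy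
  apply propext
  have hy2 : (A ^ T) *ᵥ ((A ^ T)⁻¹ *ᵥ y.ofLp) = y.ofLp := by
    rw [Matrix.mulVec_mulVec, Matrix.mul_nonsing_inv _ hAT, Matrix.one_mulVec]
  have hval := hkey _ hy
  rw [hy2] at hval
  constructor
  · rintro ⟨x0, h1, h2⟩
    have : x0 = (A ^ T)⁻¹ *ᵥ y.ofLp := by
      change y.ofLp = _ at h1
      rw [h1, Matrix.mulVec_mulVec, Matrix.nonsing_inv_mul _ hAT, Matrix.one_mulVec]
    rw [this, hval] at h2
    exact h2
  · intro h
    exact ⟨_, hy2.symm, hval.trans_le h⟩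
end
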